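/- Let ν ≥ 1 be an integer and (M_k)_{k∈ℕ} a sequence of positive reals satisfying (M.0) and (G), with associated function M(r) := sup_{k∈ℕ} log(r^{νk}/M_{νk}). Let (λ_j)_{j≥1} be positive reals, (a_j)_{j≥1} nonnegative reals, and C > 0, h > 0 constants such that for every m ∈ ℕ the series ∑_{j≥1} λ_j^{2m} a_j² converges and ∑_{j≥1} λ_j^{2m} a_j² ≤ C² · h^{2νm} · M_{νm}². Then for every j ≥ 1: a_j ≤ C · exp(−M(λ_j^{1/ν}/h)). -/

import Mathlib

/-- The associated function `M(r) = sup_{k ∈ ℕ} log ( r^{νk} / M_{νk} )`. -/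
noncomputable def assocM (ν : ℕ) (Mk : ℕ → ℝ) (r : ℝ) : ℝ :=
  ⨆ k : ℕ, Real.log (r ^ (ν * k) / Mk (ν * k))

/-! A single term of the series is bounded by its sum, so `λ_j ^ m * a_j ≤ C * h ^ (ν m) * M_{νm}`
for every `m`. With `r = λ_j ^ (1 / ν) / h` this reads `a_j * (r ^ (ν m) / M_{νm}) ≤ C`, and the
supremum over `m` of the second factor is `exp (M(r))`. -/

section AssociatedFunction

variable {ν : ℕ} {Mk : ℕ → ℝ} {r : ℝ}

theorem exp_assocM_le {K : ℝ} (hM : ∀ k, 0 < Mk k) (hr : 0 < r)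
    (hK : ∀ k, r ^ (ν * k) / Mk (ν * k) ≤ K) : Real.exp (assocM ν Mk r) ≤ K := by
  have ratio_pos (k : ℕ) : 0 < r ^ (ν * k) / Mk (ν * k) := div_pos (pow_pos hr _) (hM _)
  have K_pos : 0 < K := (ratio_pos 0).trans_le (hK 0)
  rw [← Real.le_log_iff_exp_le K_pos]
  exact ciSup_le fun k => Real.log_le_log (ratio_pos k) (hK k)

theorem le_mul_exp_neg_assocM {a C : ℝ} (hM : ∀ k, 0 < Mk k) (hr : 0 < r) (ha : 0 ≤ a)
    (h : ∀ k, a * (r ^ (ν * k) / Mk (ν * k)) ≤ C) : a ≤ C * Real.exp (-assocM ν Mk r) := by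
  rcases ha.eq_or_lt with rfl | a_pos
  -- Here the supremum may be infinite, in which case `assocM` takes the junk value `0`.
  · have C_nonneg : 0 ≤ C := by simpa only [zero_mul] using h 0
    positivity
  · have exp_le : Real.exp (assocM ν Mk r) ≤ C / a :=
      exp_assocM_le hM hr fun k => (le_div_iff₀' a_pos).2 (h k)
    rw [Real.exp_neg, ← div_eq_mul_inv, le_div_iff₀ (Real.exp_pos _)]
    exact (le_div_iff₀' a_pos).1 exp_le

end AssociatedFunction

theorem abs_le_of_tsum_sq_le_sq {ι : Type*} {f : ι → ℝ} {B : ℝ} (hf : Summable fun i => f i ^ 2)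
    (hB : 0 ≤ B) (h : ∑' i, f i ^ 2 ≤ B ^ 2) (i : ι) : |f i| ≤ B :=
  abs_le_of_sq_le_sq ((hf.le_tsum i fun _ _ => sq_nonneg _).trans h) hB

theorem rpow_one_div_natCast_pow_mul {x : ℝ} (hx : 0 ≤ x) {n : ℕ} (hn : n ≠ 0) (k : ℕ) :
    (x ^ (1 / (n : ℝ))) ^ (n * k) = x ^ k := by
  rw [pow_mul, one_div, Real.rpow_inv_natCast_pow hx hn]

theorem stmt_8_general {ι : Type*} {ν : ℕ} (hν : ν ≠ 0) {Mk : ℕ → ℝ} (hM : ∀ k, 0 < Mk k)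
    {lam a : ι → ℝ} (hlam : ∀ j, 0 < lam j) (ha : ∀ j, 0 ≤ a j)
    {C h : ℝ} (hC : 0 ≤ C) (hh : 0 < h)
    (hsum : ∀ m : ℕ, Summable fun j => lam j ^ (2 * m) * a j ^ 2)
    (hbd : ∀ m : ℕ,
      ∑' j, lam j ^ (2 * m) * a j ^ 2 ≤ C ^ 2 * h ^ (2 * ν * m) * Mk (ν * m) ^ 2) (j : ι) :
    a j ≤ C * Real.exp (-assocM ν Mk (lam j ^ (1 / (ν : ℝ)) / h)) := by
  have term_sq (m : ℕ) (i : ι) : lam i ^ (2 * m) * a i ^ 2 = (lam i ^ m * a i) ^ 2 := by ring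
  have bound_sq (m : ℕ) : C ^ 2 * h ^ (2 * ν * m) * Mk (ν * m) ^ 2 =
      (C * (h ^ (ν * m) * Mk (ν * m))) ^ 2 := by ring
  simp only [term_sq, bound_sq] at hsum hbd
  have term_le (m : ℕ) : lam j ^ m * a j ≤ C * (h ^ (ν * m) * Mk (ν * m)) :=
    have bound_nonneg := mul_nonneg hC (mul_pos (pow_pos hh _) (hM (ν * m))).le
    (le_abs_self _).trans (abs_le_of_tsum_sq_le_sq (hsum m) bound_nonneg (hbd m) j)
  have r_pos : 0 < lam j ^ (1 / (ν : ℝ)) / h := div_pos (Real.rpow_pos_of_pos (hlam j) _) hh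
  refine le_mul_exp_neg_assocM hM r_pos (ha j) fun m => ?_
  rw [div_pow, rpow_one_div_natCast_pow_mul (hlam j).le hν, div_div, mul_div_assoc',
    div_le_iff₀ (mul_pos (pow_pos hh _) (hM _)), mul_comm (a j)]
  exact term_le m

theorem stmt_8 (ν : ℕ) (hν : 1 ≤ ν) (Mk : ℕ → ℝ) (hMpos : ∀ k, 0 < Mk k)
    (hM0 : Mk 0 = 1)
    (hG : ∃ C₀ > (0 : ℝ), ∃ l > (0 : ℝ), ∀ k : ℕ, (k.factorial : ℝ) ≤ C₀ * l ^ k * Mk k)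
    (lam a : ℕ → ℝ) (hlam : ∀ j, 0 < lam j) (ha : ∀ j, 0 ≤ a j)
    (C h : ℝ) (hC : 0 < C) (hh : 0 < h)
    (hsum : ∀ m : ℕ, Summable (fun j => lam j ^ (2 * m) * a j ^ 2))
    (hbd : ∀ m : ℕ,
      (∑' j, lam j ^ (2 * m) * a j ^ 2) ≤ C ^ 2 * h ^ (2 * ν * m) * Mk (ν * m) ^ 2) :
    ∀ j, a j ≤ C * Real.exp (-(assocM ν Mk (lam j ^ (1 / (ν : ℝ)) / h))) :=
  stmt_8_general (Nat.one_le_iff_ne_zero.1 hν) hMpos hlam ha hC.le hh hsum hbd
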